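/- Let a₁, a₂, a₃ ∈ ℂ with a₃ ≠ 0 and a₂² = 3a₁a₃, let p(z,w) = a₃w³ + a₂zw² + a₁z²w, let S = {(z, p(z, z̄)) : z ∈ ℂ} ⊆ ℂ², and let Φ(z,w) = (z, p(z,w)). Suppose Ψ : ℂ² → ℂ² is a proper holomorphic map of the form Ψ(z,w) = (z, Q(z,w)) with Q a homogeneous holomorphic polynomial, and suppose Ψ⁻¹(S) can be written as the union of three pairwise transverse totally-real planes (three real-linear subspaces R₁, R₂, R₃ of ℂ² of real dimension 2 with Rⱼ ∩ iRⱼ = {0} for each j and Rⱼ ∩ Rₖ = {0} for j ≠ k). Then there is an invertible ℂ-linear map L : ℂ² → ℂ² such that Ψ = Φ ∘ L. -/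

import Mathlib

open Complex ComplexConjugate

/-- A totally-real plane in `ℂ²`: a real-linear subspace of real dimension 2
with `R ∩ iR = {0}`. -/
def TotallyRealPlane2 (R : Submodule ℝ (ℂ × ℂ)) : Prop :=
  Module.finrank ℝ R = 2 ∧
    (R : Set (ℂ × ℂ)) ∩ ((fun v => Complex.I • v) '' (R : Set (ℂ × ℂ))) = {0}

/-!
The real-linear map sending each point `(z, w)` of a totally real plane `R` with no vertical vector
to `(z, conj z)` extends to a `ℂ`-linear automorphism `L` of `ℂ²`. Properness of `Ψ` rules out
vertical vectors in a plane `R` contained in `Ψ⁻¹(S)`, and then `Ψ` and `Φ ∘ L` are entire maps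
which agree on `R`. Since `R + iR = ℂ²`, every point of `ℂ²` lies at `t = i` on a complex line
`t ↦ u + t v` with `u, v ∈ R`; on this line the two maps agree for real `t`, hence for all `t` by
the one-variable identity theorem.
-/

open scoped Pointwise Topology

section IdentityTheorem

variable {E F : Type*} [NormedAddCommGroup E] [NormedSpace ℂ E]
  [NormedAddCommGroup F] [NormedSpace ℂ F] [CompleteSpace F]

theorem eq_of_forall_ofReal_eq {f g : ℂ → F} (hf : Differentiable ℂ f) (hg : Differentiable ℂ g)
    (h : ∀ t : ℝ, f t = g t) : f = g := by
  have hreal : ∃ᶠ t : ℝ in 𝓝[≠] 0, f t = g t := .of_forall h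
  have hcoe : Filter.Tendsto ((↑) : ℝ → ℂ) (𝓝[≠] 0) (𝓝[≠] 0) :=
    continuous_ofReal.continuousWithinAt.tendsto_nhdsWithin fun _ ht => ofReal_ne_zero.2 ht
  exact AnalyticOnNhd.eq_of_frequently_eq
    (fun z _ => hf.analyticAt z) (fun z _ => hg.analyticAt z) (hcoe.frequently hreal)

theorem eq_of_eqOn_of_codisjoint_I_smul {f g : E → F} (hf : Differentiable ℂ f)
    (hg : Differentiable ℂ g) {R : Submodule ℝ E} (hR : Codisjoint R (I • R))
    (hfg : Set.EqOn f g R) : f = g := by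
  funext x
  obtain ⟨u, _, hu, ⟨v, hv, rfl⟩, rfl⟩ := Submodule.codisjoint_iff_exists_add_eq.1 hR x
  have hline : (fun t : ℂ => f (u + t • v)) = fun t : ℂ => g (u + t • v) :=
    eq_of_forall_ofReal_eq (by fun_prop) (by fun_prop) fun t =>
      hfg (by simpa only [coe_smul, SetLike.mem_coe] using R.add_mem hu (R.smul_mem t hv))
  exact congrFun hline I

end IdentityTheorem

theorem differentiable_eval_mvPolynomial {𝕜 E σ : Type*} [NontriviallyNormedField 𝕜]
    [NormedAddCommGroup E] [NormedSpace 𝕜 E] (p : MvPolynomial σ 𝕜) {f : E → σ → 𝕜}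
    (hf : ∀ i, Differentiable 𝕜 fun x => f x i) :
    Differentiable 𝕜 fun x => MvPolynomial.eval (f x) p := by
  induction p using MvPolynomial.induction_on with
  | C a => simp only [MvPolynomial.eval_C, differentiable_const]
  | add p q hp hq => simpa only [map_add] using hp.fun_add hq
  | mul_X p i hp => simpa only [map_mul, MvPolynomial.eval_X] using hp.fun_mul (hf i)

section LinearAlgebra

theorem exists_forall_eq_smul_add_conj_smul {V : Type*} [AddCommGroup V] [Module ℝ V]
    [Module ℂ V] [IsScalarTower ℝ ℂ V] (g : ℂ →ₗ[ℝ] V) :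
    ∃ α β : V, ∀ z, g z = z • α + conj z • β := by
  refine ⟨(2 : ℂ)⁻¹ • (g 1 - I • g I), (2 : ℂ)⁻¹ • (g 1 + I • g I), fun z => ?_⟩
  have hz : g z = (z.re : ℂ) • g 1 + (z.im : ℂ) • g I := by
    have hsplit : z = z.re • (1 : ℂ) + z.im • I := by simp [re_add_im]
    conv_lhs => rw [hsplit, map_add, map_smul, map_smul, ← algebraMap_smul ℂ z.re,
      ← algebraMap_smul ℂ z.im, coe_algebraMap]
  have hconj : conj z = z.re - z.im * I := by simp [Complex.ext_iff]
  rw [hz, hconj]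
  nth_rw 3 [← re_add_im z]
  match_scalars
  · ring
  · linear_combination (z.im : ℂ) * I_mul_I

theorem exists_eq_graph_of_finrank_eq {K V W : Type*} [DivisionRing K] [AddCommGroup V]
    [Module K V] [FiniteDimensional K V] [AddCommGroup W] [Module K W]
    {R : Submodule K (V × W)} (hR : Module.finrank K R = Module.finrank K V)
    (hvert : ∀ v ∈ R, v.1 = 0 → v = 0) : ∃ g : V →ₗ[K] W, R = g.graph := by
  have hinj : Function.Injective (LinearMap.fst K V W ∘ₗ R.subtype) :=
    (injective_iff_map_eq_zero _).2 fun v hv => Subtype.ext (hvert v v.2 hv)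
  have : FiniteDimensional K R := .of_injective _ hinj
  exact Submodule.exists_eq_graph
    ⟨hinj, (LinearMap.injective_iff_surjective_of_finrank_eq_finrank hR).1 hinj⟩

theorem eq_bot_of_isBounded {𝕜 E : Type*} [NontriviallyNormedField 𝕜] [NormedAddCommGroup E]
    [NormedSpace 𝕜 E] {V : Submodule 𝕜 E} (hV : Bornology.IsBounded (V : Set E)) : V = ⊥ := by
  by_contra hne
  have := Submodule.nontrivial_iff_ne_bot.2 hne
  apply NormedSpace.unbounded_univ 𝕜 V
  simpa [← Bornology.isBounded_image_subtype_val] using hV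

end LinearAlgebra

namespace TotallyRealPlane2

variable {R : Submodule ℝ (ℂ × ℂ)}

theorem disjoint_I_smul (hR : TotallyRealPlane2 R) : Disjoint R (I • R) :=
  Submodule.disjoint_def.2 fun _ hv hvI => hR.2.subset ⟨hv, hvI⟩

theorem codisjoint_I_smul (hR : TotallyRealPlane2 R) : Codisjoint R (I • R) := by
  have hI : Module.finrank ℝ (I • R : Submodule ℝ (ℂ × ℂ)) = 2 :=
    (Submodule.equivMapOfInjective (DistribSMul.toLinearMap ℝ (ℂ × ℂ) I)
      (smul_right_injective _ I_ne_zero) R).finrank_eq.symm.trans hR.1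
  have hdim : Module.finrank ℝ (ℂ × ℂ) ≤
      Module.finrank ℝ R + Module.finrank ℝ (I • R : Submodule ℝ (ℂ × ℂ)) := by
    rw [hR.1, hI, Module.finrank_prod, finrank_real_complex]
  exact codisjoint_iff.2 (Submodule.eq_top_of_disjoint _ _ hdim hR.disjoint_I_smul)

theorem exists_linearEquiv_forall_mem_eq_conj (hR : TotallyRealPlane2 R)
    (hvert : ∀ v ∈ R, v.1 = 0 → v = 0) :
    ∃ L : (ℂ × ℂ) ≃ₗ[ℂ] ℂ × ℂ, ∀ v ∈ R, L v = (v.1, conj v.1) := by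
  obtain ⟨g, rfl⟩ := exists_eq_graph_of_finrank_eq
    (hR.1.trans finrank_real_complex.symm) hvert
  obtain ⟨α, β, hg⟩ := exists_forall_eq_smul_add_conj_smul g
  have hβ : β ≠ 0 := by
    -- otherwise `g` is `ℂ`-linear and its graph contains the complex line through `(1, α)`
    rintro rfl
    have h1 : (1, α) ∈ g.graph := by simp [LinearMap.mem_graph_iff, hg]
    have hI : I • (1, α) ∈ g.graph := by simp [LinearMap.mem_graph_iff, hg]
    simpa using Submodule.disjoint_def.1 hR.disjoint_I_smul _ hI
      (Submodule.smul_mem_pointwise_smul _ _ _ h1)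
  let M : (ℂ × ℂ) ≃ₗ[ℂ] ℂ × ℂ :=
    (LinearEquiv.refl ℂ ℂ).skewProd (LinearEquiv.smulOfNeZero ℂ ℂ β hβ) (α • LinearMap.id)
  refine ⟨M.symm, fun v hv => ?_⟩
  have hv₂ : v.2 = v.1 • α + conj v.1 • β :=
    ((LinearMap.mem_graph_iff _ _).1 hv).trans (hg v.1)
  rw [LinearEquiv.symm_apply_eq]
  ext
  · simp [M]
  · simp [M, hv₂, mul_comm, add_comm]

end TotallyRealPlane2

theorem stmt_1_general {P Q : ℂ × ℂ → ℂ} (hP : Differentiable ℂ P) (hQ : Differentiable ℂ Q)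
    {Ψ : ℂ × ℂ → ℂ × ℂ} (hΨ : ∀ v, Ψ v = (v.1, Q v)) (hproper : IsProperMap Ψ)
    {R : Submodule ℝ (ℂ × ℂ)} (hR : TotallyRealPlane2 R)
    (hpre : (R : Set (ℂ × ℂ)) ⊆ Ψ ⁻¹' {v | ∃ z : ℂ, v = (z, P (z, conj z))}) :
    ∃ L : (ℂ × ℂ) ≃ₗ[ℂ] ℂ × ℂ, Ψ = (fun v => (v.1, P v)) ∘ L := by
  have hΨR : ∀ v ∈ R, Ψ v = (v.1, P (v.1, conj v.1)) := fun v hv => by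
    obtain ⟨z, hz⟩ := hpre hv
    obtain rfl : v.1 = z := congrArg Prod.fst ((hΨ v).symm.trans hz)
    exact hz
  have hvert : ∀ v ∈ R, v.1 = 0 → v = 0 := fun v hv hv₀ => by
    have hfibre : (↑(R ⊓ (LinearMap.fst ℝ ℂ ℂ).ker) : Set (ℂ × ℂ)) ⊆ Ψ ⁻¹' {Ψ 0} := by
      rintro u ⟨hu, hu₀⟩
      have hu₀ : u.1 = 0 := hu₀
      simp only [Set.mem_preimage, Set.mem_singleton_iff, hΨR u hu, hΨR 0 R.zero_mem, hu₀,
        Prod.fst_zero]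
    have hbot := eq_bot_of_isBounded
      ((hproper.isCompact_preimage isCompact_singleton).isBounded.subset hfibre)
    exact (Submodule.eq_bot_iff _).1 hbot v ⟨hv, hv₀⟩
  obtain ⟨L, hL⟩ := hR.exists_linearEquiv_forall_mem_eq_conj hvert
  refine ⟨L, eq_of_eqOn_of_codisjoint_I_smul ?_ ?_ hR.codisjoint_I_smul fun v hv => ?_⟩
  · rw [funext hΨ]
    fun_prop
  · have hLdiff : Differentiable ℂ L := L.toContinuousLinearEquiv.differentiable
    fun_prop
  · simp only [hΨR v hv, Function.comp_apply, hL v hv]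

/-- uniqueness of the proper holomorphic map pulling `S` back to a union of
three pairwise transverse totally-real planes: any such `Ψ(z,w) = (z, Q(z,w))` with `Q`
a homogeneous holomorphic polynomial equals `Φ` composed with an invertible `ℂ`-linear map. -/
theorem stmt_1 (a₁ a₂ a₃ : ℂ) (ha₃ : a₃ ≠ 0) (ha : a₂ ^ 2 = 3 * a₁ * a₃)
    (Q : MvPolynomial (Fin 2) ℂ) (d : ℕ) (hQ : Q.IsHomogeneous d)
    (Ψ : ℂ × ℂ → ℂ × ℂ)
    (hΨ : ∀ zw : ℂ × ℂ,
      Ψ zw = (zw.1, MvPolynomial.eval (fun i => if i = 0 then zw.1 else zw.2) Q))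
    (hproper : IsProperMap Ψ)
    (R₁ R₂ R₃ : Submodule ℝ (ℂ × ℂ))
    (hR₁ : TotallyRealPlane2 R₁) (hR₂ : TotallyRealPlane2 R₂) (hR₃ : TotallyRealPlane2 R₃)
    (htrans12 : (R₁ : Set (ℂ × ℂ)) ∩ (R₂ : Set (ℂ × ℂ)) = {0})
    (htrans13 : (R₁ : Set (ℂ × ℂ)) ∩ (R₃ : Set (ℂ × ℂ)) = {0})
    (htrans23 : (R₂ : Set (ℂ × ℂ)) ∩ (R₃ : Set (ℂ × ℂ)) = {0})
    (hpre : Ψ ⁻¹' {zw : ℂ × ℂ | ∃ z : ℂ,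
        zw = (z, a₃ * (conj z) ^ 3 + a₂ * z * (conj z) ^ 2 + a₁ * z ^ 2 * conj z)} =
      (R₁ : Set (ℂ × ℂ)) ∪ (R₂ : Set (ℂ × ℂ)) ∪ (R₃ : Set (ℂ × ℂ))) :
    ∃ L : (ℂ × ℂ) ≃ₗ[ℂ] ℂ × ℂ,
      Ψ = (fun zw : ℂ × ℂ =>
        (zw.1, a₃ * zw.2 ^ 3 + a₂ * zw.1 * zw.2 ^ 2 + a₁ * zw.1 ^ 2 * zw.2)) ∘ ⇑L := by
  exact stmt_1_general (P := fun v => a₃ * v.2 ^ 3 + a₂ * v.1 * v.2 ^ 2 + a₁ * v.1 ^ 2 * v.2)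
    (by fun_prop)
    (differentiable_eval_mvPolynomial Q fun i => by split_ifs <;> fun_prop)
    hΨ hproper hR₁ (hpre ▸ Set.subset_union_left.trans Set.subset_union_left)
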